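/- arXiv:1804.05216 — 4 statements merged into one kernel-verified Lean document; each statement's English description precedes it below -/
import Mathlib

section
/- Let G be a group with a finite symmetric generating set S such that the Cayley graph Γ(G,S) is k-almost convex for every k ∈ ℕ. Then G is finitely presented: there is a finite set X and a surjective group homomorphism from the free group on X onto G whose kernel is the normal closure of a finite subset. -/
/-- The Cayley graph of a group `G` with respect to a (symmetric) generating set `S`:
`x` is adjacent to `y` iff `x ≠ y` and `x⁻¹ * y ∈ S` (for symmetric `S`). -/
def cayleyGraph (G : Type*) [Group G] (S : Set G) : SimpleGraph G :=
  SimpleGraph.fromRel (fun x y => x⁻¹ * y ∈ S)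

/-- A graph `Γ` with basepoint `o` is *k-almost convex* if there is `N` such that any two
vertices on the sphere of radius `n` about `o` at distance at most `k` from each other can
be joined by a path of length at most `N` staying in the ball of radius `n`. -/
def KAlmostConvex {V : Type*} (Γ : SimpleGraph V) (o : V) (k : ℕ) : Prop :=
  ∃ N : ℕ, ∀ (n : ℕ) (x y : V), Γ.dist o x = n → Γ.dist o y = n → Γ.dist x y ≤ k →
    ∃ w : Γ.Walk x y, w.length ≤ N ∧ ∀ v ∈ w.support, Γ.dist o v ≤ n

/-- A group is *finitely presented* if it is the quotient of a free group on a finite set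
by the normal closure of a finite set of relators. -/
def IsFinitelyPresented (G : Type*) [Group G] : Prop :=
  ∃ (X : Type) (_ : Finite X) (φ : FreeGroup X →* G),
    Function.Surjective φ ∧
    ∃ R : Set (FreeGroup X), R.Finite ∧ φ.ker = Subgroup.normalClosure R

/-- **Cannon.** A group whose Cayley graph (with respect to a finite symmetric generating
set) is `k`-almost convex for every `k` is finitely presented. -/
theorem almostConvex_finitelyPresented
    (G : Type) [Group G] (S : Set G)
    (hS_fin : S.Finite) (hS_symm : ∀ s ∈ S, s⁻¹ ∈ S) (hS_one : (1 : G) ∉ S)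
    (hS_gen : Subgroup.closure S = ⊤)
    (hac : ∀ k : ℕ, KAlmostConvex (cayleyGraph G S) 1 k) :
    IsFinitelyPresented G := by
  classical
  obtain ⟨N, hN⟩ := hac 3
  have hadj : ∀ g h : G, (cayleyGraph G S).Adj g h ↔ g⁻¹ * h ∈ S := by
    intro g h
    rw [cayleyGraph, SimpleGraph.fromRel_adj]
    constructor
    · rintro ⟨_, h1 | h1⟩
      · exact h1
      · simpa using hS_symm _ h1
    · intro h1
      refine ⟨?_, Or.inl h1⟩
      rintro rfl
      exact hS_one (by simpa using h1)
  generalize cayleyGraph G S = Γ at hN hadj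
  have hreach : ∀ g : G, Γ.Reachable 1 g := by
    intro g
    have hg : g ∈ Subgroup.closure S := by rw [hS_gen]; trivial
    induction hg using Subgroup.closure_induction_right with
    | one => exact SimpleGraph.Reachable.refl _
    | mul_right x hx y hy ih =>
      exact ih.trans (SimpleGraph.Adj.reachable ((hadj _ _).2 (by simpa using hy)))
    | mul_inv_cancel x hx y hy ih =>
      exact ih.trans (SimpleGraph.Adj.reachable ((hadj _ _).2 (by simpa using hS_symm _ hy)))
  have hconn : Γ.Connected :=
    (SimpleGraph.connected_iff_exists_forall_reachable Γ).2 ⟨1, hreach⟩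
  have hpar : ∀ g : G, ∃ p : G, ∀ n, Γ.dist 1 g = n + 1 → Γ.dist 1 p = n ∧ Γ.Adj p g := by
    intro g
    obtain ⟨w, hw⟩ := (hreach g).symm.exists_walk_length_eq_dist
    cases w with
    | nil => exact ⟨1, fun n hn => by simp at hn⟩
    | @cons _ p _ h w =>
      refine ⟨p, fun n hn => ⟨?_, h.symm⟩⟩
      rw [SimpleGraph.Walk.length_cons, SimpleGraph.dist_comm, hn] at hw
      have h1 := SimpleGraph.dist_le w
      have h2 := hconn.dist_triangle (u := 1) (v := p) (w := g)
      have h3 : Γ.dist p g ≤ 1 := (SimpleGraph.dist_eq_one_iff_adj.2 h.symm).le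
      rw [SimpleGraph.dist_comm] at h1
      omega
  choose p hp using hpar
  have : Finite S := hS_fin
  let φ : FreeGroup S →* G := FreeGroup.lift (fun s => (s : G))
  have hφ : ∀ s, φ (FreeGroup.of s) = s := fun s => by simp [φ]
  let R : Set (FreeGroup S) := {r | φ r = 1 ∧ r.norm ≤ N + 3}
  have hR : R.Finite := by
    refine ((List.finite_length_le (S × Bool) (N + 3)).image FreeGroup.mk).subset ?_
    rintro r ⟨_, hr⟩
    exact ⟨r.toWord, hr, FreeGroup.mk_toWord⟩
  let π : FreeGroup S →* (FreeGroup S ⧸ Subgroup.normalClosure R) := QuotientGroup.mk' _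
  have hπ : ∀ a b, φ a = φ b → a.norm ≤ N → b.norm ≤ 3 → π a = π b := by
    intro a b h1 h2 h3
    refine QuotientGroup.eq.2 (Subgroup.subset_normalClosure ⟨by simp [h1], ?_⟩)
    have := FreeGroup.norm_mul_le a⁻¹ b
    rw [FreeGroup.norm_inv_eq] at this
    omega
  let e : G → FreeGroup S := fun s => if h : s ∈ S then FreeGroup.of ⟨s, h⟩ else 1
  have he : ∀ s ∈ S, φ (e s) = s := by
    intro s hs
    simp [e, hs, hφ]
  have hen : ∀ s, (e s).norm ≤ 1 := by
    intro s
    by_cases hs : s ∈ S <;> simp [e, hs]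
  let f : ℕ → G → (FreeGroup S ⧸ Subgroup.normalClosure R) := fun n =>
    Nat.rec (fun _ => 1) (fun _ F g => F (p g) * π (e ((p g)⁻¹ * g))) n
  let σ : G → (FreeGroup S ⧸ Subgroup.normalClosure R) := fun g => f (Γ.dist 1 g) g
  have hσ1 : σ 1 = 1 := by simp [σ, f]
  have hσ : ∀ n g, Γ.dist 1 g = n + 1 → σ g = σ (p g) * π (e ((p g)⁻¹ * g)) := by
    intro n g hg
    have := (hp g n hg).1
    simp only [σ, hg, this]
    rfl
  have hE : ∀ n, ∀ g h, Γ.dist 1 g ≤ n → Γ.dist 1 h ≤ n → Γ.Adj g h →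
      σ g * π (e (g⁻¹ * h)) = σ h := by
    intro n
    induction n with
    | zero =>
      intro g h hg hh hgh
      have h1 := hconn.dist_eq_zero_iff.1 (Nat.le_zero.1 hg)
      have h2 := hconn.dist_eq_zero_iff.1 (Nat.le_zero.1 hh)
      subst h1 h2
      exact (Γ.loopless.irrefl _ hgh).elim
    | succ n ih =>
      have hW : ∀ x y (w : Γ.Walk x y), (∀ v ∈ w.support, Γ.dist 1 v ≤ n) →
          ∃ v : FreeGroup S, v.norm ≤ w.length ∧ φ v = x⁻¹ * y ∧ σ x * π v = σ y := by
        intro x y w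
        induction w with
        | nil => intro _; exact ⟨1, by simp⟩
        | @cons x z y h w ihw =>
          intro hw
          obtain ⟨v, hv1, hv2, hv3⟩ := ihw (fun u hu => hw u (by simp [hu]))
          refine ⟨e (x⁻¹ * z) * v, ?_, ?_, ?_⟩
          · have h1 := FreeGroup.norm_mul_le (e (x⁻¹ * z)) v
            have h2 := hen (x⁻¹ * z)
            rw [SimpleGraph.Walk.length_cons]
            omega
          · rw [map_mul, hv2, he _ ((hadj _ _).1 h)]; group
          · rw [map_mul, ← mul_assoc, ih x z (hw _ (by simp)) (hw _ (by simp)) h, hv3]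
      have hT : ∀ x y v, Γ.dist 1 x = n → Γ.dist 1 y = n → Γ.dist x y ≤ 3 →
          v.norm ≤ 3 → φ v = x⁻¹ * y → σ x * π v = σ y := by
        intro x y v hx hy hxy hv hv2
        obtain ⟨w, hw1, hw2⟩ := hN n x y hx hy hxy
        obtain ⟨v', h1, h2, h3⟩ := hW x y w hw2
        rw [← hπ v' v (h2.trans hv2.symm) (h1.trans hw1) hv, h3]
      have hfoot : ∀ g, n ≤ Γ.dist 1 g → Γ.dist 1 g ≤ n + 1 → ∃ x u, Γ.dist 1 x = n ∧
          Γ.dist x g ≤ 1 ∧ FreeGroup.norm u ≤ 1 ∧ φ u = x⁻¹ * g ∧ σ x * π u = σ g := by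
        intro g h1 h2
        by_cases hg : Γ.dist 1 g = n
        · exact ⟨g, 1, hg, by simp, by simp, by simp, by simp⟩
        · have hg' : Γ.dist 1 g = n + 1 := by omega
          obtain ⟨h3, h4⟩ := hp g n hg'
          exact ⟨p g, e ((p g)⁻¹ * g), h3, (SimpleGraph.dist_eq_one_iff_adj.2 h4).le, hen _,
            he _ ((hadj _ _).1 h4), (hσ n g hg').symm⟩
      intro g h hg hh hgh
      by_cases hb : Γ.dist 1 g ≤ n ∧ Γ.dist 1 h ≤ n
      · exact ih g h hb.1 hb.2 hgh
      have d1 : Γ.dist g h = 1 := SimpleGraph.dist_eq_one_iff_adj.2 hgh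
      have d2 : Γ.dist h g = 1 := SimpleGraph.dist_eq_one_iff_adj.2 hgh.symm
      have t1 := hconn.dist_triangle (u := 1) (v := g) (w := h)
      have t2 := hconn.dist_triangle (u := 1) (v := h) (w := g)
      obtain ⟨x, u, hx1, hx2, hu1, hu2, hu3⟩ := hfoot g (by omega) hg
      obtain ⟨y, v, hy1, hy2, hv1, hv2, hv3⟩ := hfoot h (by omega) hh
      have t3 := hconn.dist_triangle (u := x) (v := g) (w := y)
      have t4 := hconn.dist_triangle (u := g) (v := h) (w := y)
      rw [SimpleGraph.dist_comm] at hy2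
      have key := hT x y (u * e (g⁻¹ * h) * v⁻¹) hx1 hy1 (by omega) (by
        have n1 := FreeGroup.norm_mul_le (u * e (g⁻¹ * h)) v⁻¹
        have n2 := FreeGroup.norm_mul_le u (e (g⁻¹ * h))
        have n3 := hen (g⁻¹ * h)
        rw [FreeGroup.norm_inv_eq] at n1
        omega) (by
        rw [map_mul, map_mul, map_inv, hu2, hv2, he _ ((hadj _ _).1 hgh)]; group)
      rw [← hv3, ← key, ← hu3]
      simp [mul_assoc]
  have hE' : ∀ g (s : S), σ g * π (FreeGroup.of s) = σ (g * s) := by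
    intro g s
    have := hE (max (Γ.dist 1 g) (Γ.dist 1 (g * s))) g (g * s) (le_max_left _ _)
      (le_max_right _ _) ((hadj _ _).2 (by simp))
    simpa [e] using this
  have hF : ∀ (w : FreeGroup S) g, σ g * π w = σ (g * φ w) := by
    intro w
    induction w using FreeGroup.induction_on with
    | C1 => intro g; simp
    | of s => intro g; rw [hφ]; exact hE' g s
    | inv_of s _ =>
      intro g
      rw [map_inv, map_inv, hφ, mul_inv_eq_iff_eq_mul, hE']
      simp
    | mul a b ha hb =>
      intro g
      rw [map_mul, map_mul, ← mul_assoc, ha, hb, mul_assoc]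
  refine ⟨S, this, φ, ?_, R, hR, ?_⟩
  · rw [← MonoidHom.range_eq_top, eq_top_iff, ← hS_gen, Subgroup.closure_le]
    intro s hs
    exact ⟨e s, he s hs⟩
  · apply le_antisymm
    · intro w hw
      have h1 := hF w 1
      rw [MonoidHom.mem_ker.1 hw, mul_one, hσ1, one_mul] at h1
      exact (QuotientGroup.eq_one_iff w).1 h1
    · exact Subgroup.normalClosure_le_normal (fun r hr => hr.1)
end

section
/- For every n ≥ 1, the free abelian group ℤⁿ with the standard symmetric generating set S = {±e₁, …, ±eₙ} (the standard basis vectors and their inverses) has Cayley graph Γ(ℤⁿ, S) that is k-almost convex for every k ∈ ℕ. -/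
/-- The Cayley graph of an additive group `G` with respect to a (symmetric) generating
set `S`: `x` is adjacent to `y` iff `x ≠ y` and `-x + y ∈ S` (for symmetric `S`). -/
def cayleyGraphAdd (G : Type*) [AddGroup G] (S : Set G) : SimpleGraph G :=
  SimpleGraph.fromRel (fun x y => -x + y ∈ S)

def l1n {n : ℕ} (v : Fin n → ℤ) : ℕ := ∑ i, (v i).natAbs

abbrev znG (n : ℕ) : SimpleGraph (Fin n → ℤ) :=
  cayleyGraphAdd (Fin n → ℤ)
        {v : Fin n → ℤ | ∃ i : Fin n, v = Pi.single i 1 ∨ v = -(Pi.single i 1)}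

theorem l1n_add {n : ℕ} (x : Fin n → ℤ) (i : Fin n) (c : ℤ) :
    l1n (x + Pi.single i c) + (x i).natAbs = l1n x + (x i + c).natAbs := by
  unfold l1n
  rw [← Finset.add_sum_erase _ _ (Finset.mem_univ i),
    ← Finset.add_sum_erase _ (fun i => (x i).natAbs) (Finset.mem_univ i)]
  have : ∑ j ∈ Finset.univ.erase i, ((x + Pi.single i c : Fin n → ℤ) j).natAbs
      = ∑ j ∈ Finset.univ.erase i, (x j).natAbs := by
    apply Finset.sum_congr rfl
    intro j hj
    simp [Pi.single_eq_of_ne (Finset.ne_of_mem_erase hj)]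
  rw [this]
  simp
  omega

theorem zn_adj {n : ℕ} (x y : Fin n → ℤ) :
    (znG n).Adj x y ↔ ∃ i : Fin n, ∃ c : ℤ, (c = 1 ∨ c = -1) ∧ y = x + Pi.single i c := by
  simp only [znG, cayleyGraphAdd, SimpleGraph.fromRel_adj, Set.mem_ofPred_eq]
  constructor
  · rintro ⟨-, ⟨i, h | h⟩ | ⟨i, h | h⟩⟩
    · exact ⟨i, 1, by simp, by rw [← h]; abel⟩
    · exact ⟨i, -1, by simp, by rw [Pi.single_neg, ← h]; abel⟩
    · exact ⟨i, -1, by simp, by rw [Pi.single_neg, ← h]; abel⟩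
    · refine ⟨i, 1, by simp, ?_⟩
      rw [← neg_eq_iff_eq_neg] at h; rw [← h]; abel
  · rintro ⟨i, c, hc, rfl⟩
    refine ⟨fun h => ?_, Or.inl ⟨i, ?_⟩⟩
    · have := congrFun h i
      simp at this
      omega
    · rcases hc with rfl | rfl
      · left; abel
      · right; rw [Pi.single_neg]; abel

theorem zn_step {n : ℕ} (x y : Fin n → ℤ) (h : x ≠ y) :
    (∃ x', (znG n).Adj x x' ∧ l1n x' ≤ l1n x ∧ l1n (x' - y) + 1 = l1n (x - y)) ∨
    (∃ y', (znG n).Adj y' y ∧ l1n y' ≤ l1n y ∧ l1n (x - y') + 1 = l1n (x - y)) := by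
  obtain ⟨i, hi⟩ := Function.ne_iff.mp h
  have mx : ∀ c : ℤ, (c = 1 ∨ c = -1) → (x i + c).natAbs ≤ (x i).natAbs →
      (x i - y i + c).natAbs + 1 = (x i - y i).natAbs →
      (∃ x', (znG n).Adj x x' ∧ l1n x' ≤ l1n x ∧ l1n (x' - y) + 1 = l1n (x - y)) := by
    intro c hc h1 h2
    refine ⟨x + Pi.single i c, (zn_adj _ _).2 ⟨i, c, hc, rfl⟩, ?_, ?_⟩
    · have := l1n_add x i c; omega
    · have := l1n_add (x - y) i c
      rw [Pi.sub_apply] at this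
      rw [show x + Pi.single i c - y = x - y + Pi.single i c by abel]
      omega
  have my : ∀ c : ℤ, (c = 1 ∨ c = -1) → (y i + c).natAbs ≤ (y i).natAbs →
      (x i - y i + -c).natAbs + 1 = (x i - y i).natAbs →
      (∃ y', (znG n).Adj y' y ∧ l1n y' ≤ l1n y ∧ l1n (x - y') + 1 = l1n (x - y)) := by
    intro c hc h1 h2
    refine ⟨y + Pi.single i c, ((zn_adj _ _).2 ⟨i, c, hc, rfl⟩).symm, ?_, ?_⟩
    · have := l1n_add y i c; omega
    · have := l1n_add (x - y) i (-c)
      rw [Pi.sub_apply] at this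
      rw [show x - (y + Pi.single i c) = x - y + Pi.single i (-c) by
        rw [Pi.single_neg]; abel]
      omega
  rcases lt_or_gt_of_ne hi with hlt | hlt
  · by_cases h0 : x i < 0
    · left; apply mx 1 <;> omega
    · right; apply my (-1) <;> omega
  · by_cases h0 : 0 < x i
    · left; apply mx (-1) <;> omega
    · right; apply my 1 <;> omega

theorem zn_walk {n : ℕ} (r m : ℕ) : ∀ x y : Fin n → ℤ, l1n (x - y) = m → l1n x ≤ r →
    l1n y ≤ r → ∃ w : (znG n).Walk x y, w.length = m ∧ ∀ v ∈ w.support, l1n v ≤ r := by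
  induction m with
  | zero =>
    intro x y h hx hy
    by_cases hxy : x = y
    · subst hxy
      exact ⟨.nil, rfl, by simpa using hx⟩
    · rcases zn_step x y hxy with ⟨z, _, _, hz⟩ | ⟨z, _, _, hz⟩ <;> omega
  | succ m ih =>
    intro x y h hx hy
    have hxy : x ≠ y := by
      rintro rfl
      simp [l1n] at h
    rcases zn_step x y hxy with ⟨z, ha, hl, hz⟩ | ⟨z, ha, hl, hz⟩
    · obtain ⟨w, hw, hs⟩ := ih z y (by omega) (by omega) hy
      refine ⟨.cons ha w, by simp [hw], ?_⟩
      intro v hv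
      rw [SimpleGraph.Walk.support_cons, List.mem_cons] at hv
      rcases hv with rfl | hv
      · exact hx
      · exact hs v hv
    · obtain ⟨w, hw, hs⟩ := ih x z (by omega) hx (by omega)
      refine ⟨w.concat ha, by simp [hw], ?_⟩
      intro v hv
      rw [SimpleGraph.Walk.support_concat] at hv
      simp only [List.concat_eq_append, List.mem_append, List.mem_singleton] at hv
      rcases hv with hv | rfl
      · exact hs v hv
      · exact hy

theorem zn_lower {n : ℕ} {x y : Fin n → ℤ} (w : (znG n).Walk x y) : l1n (x - y) ≤ w.length := by
  induction w with
  | nil => simp [l1n]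
  | @cons u v z h p ih =>
    obtain ⟨i, c, hc, rfl⟩ := (zn_adj _ _).1 h
    have := l1n_add (u - z) i c
    rw [show u + Pi.single i c - z = u - z + Pi.single i c by abel] at ih
    rw [SimpleGraph.Walk.length_cons]
    omega

theorem zn_dist {n : ℕ} (x y : Fin n → ℤ) : (znG n).dist x y = l1n (x - y) := by
  obtain ⟨w, hw, -⟩ := zn_walk (max (l1n x) (l1n y)) _ x y rfl (le_max_left _ _) (le_max_right _ _)
  apply le_antisymm
  · rw [← hw]; exact SimpleGraph.dist_le w
  · obtain ⟨p, hp⟩ := SimpleGraph.Reachable.exists_walk_length_eq_dist ⟨w⟩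
    rw [← hp]; exact zn_lower p

theorem zn_dist0 {n : ℕ} (x : Fin n → ℤ) : (znG n).dist 0 x = l1n x := by
  rw [zn_dist]; simp [l1n]

/-- The free abelian group `ℤⁿ` (`n ≥ 1`) with its standard symmetric generating set
`{±e₁, …, ±eₙ}` has a Cayley graph that is `k`-almost convex for every `k`. -/
theorem zn_almostConvex (n : ℕ) (hn : 1 ≤ n) (k : ℕ) :
    KAlmostConvex
      (cayleyGraphAdd (Fin n → ℤ)
        {v : Fin n → ℤ | ∃ i : Fin n, v = Pi.single i 1 ∨ v = -(Pi.single i 1)})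
      0 k := by
  refine ⟨k, fun r x y hx hy hxy => ?_⟩
  have hx' := (zn_dist0 x).symm.trans hx
  have hy' := (zn_dist0 y).symm.trans hy
  obtain ⟨w, hw, hs⟩ := zn_walk r _ x y rfl hx'.le hy'.le
  refine ⟨w, ?_, fun v hv => ?_⟩
  · rw [hw, ← zn_dist]; exact hxy
  · exact (zn_dist0 v).trans_le (hs v hv)
end

section
/- For every integer n ≥ 2, the solvable Baumslag–Solitar group BS(1,n) = ⟨a, t | t a t⁻¹ = aⁿ⟩ (the presented group on two generators with the single relator t a t⁻¹ a⁻ⁿ) is not almost convex: for every finite symmetric generating set S of BS(1,n) there exists k ∈ ℕ such that the Cayley graph Γ(BS(1,n), S) is not k-almost convex. -/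
/-- The Baumslag–Solitar relator `t * a * t⁻¹ * a⁻ⁿ`, where `a = FreeGroup.of false` and
`t = FreeGroup.of true`. -/
def bsRel (n : ℕ) : FreeGroup Bool :=
  FreeGroup.of true * FreeGroup.of false * (FreeGroup.of true)⁻¹ * (FreeGroup.of false ^ n)⁻¹

/-- The solvable Baumslag–Solitar group `BS(1,n) = ⟨a, t | t a t⁻¹ = aⁿ⟩`. -/
def BS (n : ℕ) : Type := PresentedGroup ({bsRel n} : Set (FreeGroup Bool))

instance (n : ℕ) : Group (BS n) := by unfold BS; infer_instance

namespace BSProof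

def ga (n : ℕ) : BS n := (PresentedGroup.of false : PresentedGroup ({bsRel n} : Set (FreeGroup Bool)))
def gt (n : ℕ) : BS n := (PresentedGroup.of true : PresentedGroup ({bsRel n} : Set (FreeGroup Bool)))

lemma rel (n : ℕ) : gt n * ga n * (gt n)⁻¹ = ga n ^ n := by
  have h : (PresentedGroup.mk ({bsRel n} : Set (FreeGroup Bool))) (bsRel n) = 1 :=
    (PresentedGroup.one_of_mem (by simp))
  have h2 : gt n * ga n * (gt n)⁻¹ * (ga n ^ n)⁻¹ = 1 := h
  exact mul_inv_eq_one.mp h2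

lemma clos (n : ℕ) : Subgroup.closure ({ga n, gt n} : Set (BS n)) = ⊤ := by
  have h := PresentedGroup.closure_range_of ({bsRel n} : Set (FreeGroup Bool))
  have h2 : Set.range (PresentedGroup.of : Bool → PresentedGroup ({bsRel n} : Set (FreeGroup Bool))) = ({ga n, gt n} : Set (BS n)) := by
    ext x
    constructor
    · rintro ⟨b, rfl⟩
      cases b
      · left; rfl
      · right; rfl
    · rintro (rfl | rfl)
      · exact ⟨false, rfl⟩
      · exact ⟨true, rfl⟩
  rw [h2] at h
  exact h

lemma ind {n : ℕ} {p : BS n → Prop} (h1 : p 1) (ha : ∀ g, p g → p (ga n * g))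
    (ha' : ∀ g, p g → p ((ga n)⁻¹ * g)) (ht : ∀ g, p g → p (gt n * g))
    (ht' : ∀ g, p g → p ((gt n)⁻¹ * g)) (g : BS n) : p g := by
  have hg : g ∈ Subgroup.closure ({ga n, gt n} : Set (BS n)) := by rw [clos]; trivial
  induction hg using Subgroup.closure_induction_left with
  | one => exact h1
  | mul_left x hx y hy ih =>
    rcases hx with rfl | rfl
    · exact ha _ ih
    · exact ht _ ih
  | inv_mul_cancel x hx y hy ih =>
    rcases hx with rfl | rfl
    · exact ha' _ ih
    · exact ht' _ ih

lemma t_pow (n i : ℕ) : gt n ^ i * ga n * (gt n ^ i)⁻¹ = ga n ^ (n ^ i) := by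
  induction i with
  | zero => simp
  | succ i ih =>
    have : gt n ^ (i+1) * ga n * (gt n ^ (i+1))⁻¹ = gt n ^ i * (gt n * ga n * (gt n)⁻¹) * (gt n ^ i)⁻¹ := by
      rw [pow_succ]; group
    rw [this, rel, ← conj_pow, ih, ← pow_mul, pow_succ]

lemma conj_mem (n : ℕ) (g : BS n) :
    ∃ (i : ℕ) (k : ℤ), gt n ^ i * (g * ga n * g⁻¹) * (gt n ^ i)⁻¹ = ga n ^ k := by
  have up : ∀ (k : ℤ), gt n * ga n ^ k * (gt n)⁻¹ = ga n ^ (n * k) := by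
    intro k
    rw [← conj_zpow, rel, zpow_mul, zpow_natCast]
  induction g using ind with
  | h1 => exact ⟨0, 1, by simp⟩
  | ha g ih =>
    obtain ⟨i, k, h⟩ := ih
    refine ⟨i, k, ?_⟩
    have : gt n ^ i * (ga n * g * ga n * (ga n * g)⁻¹) * (gt n ^ i)⁻¹ =
      (gt n ^ i * ga n * (gt n ^ i)⁻¹) * (gt n ^ i * (g * ga n * g⁻¹) * (gt n ^ i)⁻¹) *
        (gt n ^ i * ga n * (gt n ^ i)⁻¹)⁻¹ := by group
    rw [this, h, t_pow]; group
  | ha' g ih =>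
    obtain ⟨i, k, h⟩ := ih
    refine ⟨i, k, ?_⟩
    have : gt n ^ i * ((ga n)⁻¹ * g * ga n * ((ga n)⁻¹ * g)⁻¹) * (gt n ^ i)⁻¹ =
      (gt n ^ i * ga n * (gt n ^ i)⁻¹)⁻¹ * (gt n ^ i * (g * ga n * g⁻¹) * (gt n ^ i)⁻¹) *
        (gt n ^ i * ga n * (gt n ^ i)⁻¹) := by group
    rw [this, h, t_pow]; group
  | ht g ih =>
    obtain ⟨i, k, h⟩ := ih
    refine ⟨i, n * k, ?_⟩
    rw [← up, ← h]
    group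
  | ht' g ih =>
    obtain ⟨i, k, h⟩ := ih
    refine ⟨i + 1, k, ?_⟩
    rw [← h, pow_succ]
    group

lemma comm (n : ℕ) (g : BS n) : Commute (ga n) (g * ga n * g⁻¹) := by
  obtain ⟨i, k, h⟩ := conj_mem n g
  have h1 := t_pow n i
  have : Commute (gt n ^ i * ga n * (gt n ^ i)⁻¹) (gt n ^ i * (g * ga n * g⁻¹) * (gt n ^ i)⁻¹) := by
    rw [h, h1]
    exact ((Commute.refl (ga n)).pow_left _).zpow_right _
  exact (Commute.conj_iff _).mp this

noncomputable def hh (n : ℕ) : BS n →* Multiplicative ℤ :=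
  PresentedGroup.toGroup (rels := {bsRel n})
    (f := fun b => if b then Multiplicative.ofAdd 1 else 1)
    (by intro r hr; rw [Set.mem_singleton_iff] at hr; subst hr; simp [bsRel])

noncomputable def ht (n : ℕ) (g : BS n) : ℤ := Multiplicative.toAdd (hh n g)

lemma ht_mul (n : ℕ) (g k : BS n) : ht n (g * k) = ht n g + ht n k := by
  simp [ht]
lemma ht_inv (n : ℕ) (g : BS n) : ht n g⁻¹ = - ht n g := by simp [ht]
lemma ht_one (n : ℕ) : ht n 1 = 0 := by simp [ht]
lemma ht_pow (n : ℕ) (g : BS n) (i : ℕ) : ht n (g ^ i) = i * ht n g := by simp [ht]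
lemma ht_a (n : ℕ) : ht n (ga n) = 0 := by
  have : hh n (ga n) = 1 := by
    refine (PresentedGroup.toGroup.of _).trans ?_
    simp
  simp [ht, this]
lemma ht_t (n : ℕ) : ht n (gt n) = 1 := by
  have : hh n (gt n) = Multiplicative.ofAdd 1 := by
    refine (PresentedGroup.toGroup.of _).trans ?_
    simp
  simp [ht, this]

noncomputable def ph (n : ℕ) (hn : (n : ℚ) ≠ 0) : BS n →* Equiv.Perm ℚ :=
  PresentedGroup.toGroup (rels := {bsRel n})
    (f := fun b => if b then Equiv.mulLeft₀ (n : ℚ) hn else Equiv.addRight 1)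
    (by
      intro r hr; rw [Set.mem_singleton_iff] at hr; subst hr
      simp only [bsRel, map_mul, map_inv, map_pow, FreeGroup.lift_apply_of, if_true]
      rw [mul_inv_eq_one, mul_inv_eq_iff_eq_mul]
      have : ∀ k : ℕ, ∀ y : ℚ, ((Equiv.addRight (1 : ℚ)) ^ k : Equiv.Perm ℚ) y = y + k := by
        intro k
        induction k with
        | zero => intro y; simp
        | succ k ih => intro y; rw [pow_succ, Equiv.Perm.mul_apply, ih]; simp; ring
      ext y
      simp only [Equiv.Perm.mul_apply]
      simp [this]
      ring)

variable {n : ℕ} {hn : (n : ℚ) ≠ 0}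

lemma ph_a (y : ℚ) : ph n hn (ga n) y = y + 1 := by
  have : ph n hn (ga n) = Equiv.addRight 1 := by
    refine (PresentedGroup.toGroup.of _).trans ?_
    simp
  simp [this]
lemma ph_t (y : ℚ) : ph n hn (gt n) y = n * y := by
  have : ph n hn (gt n) = Equiv.mulLeft₀ (n : ℚ) hn := by
    refine (PresentedGroup.toGroup.of _).trans ?_
    simp
  simp [this]
lemma ph_a' (y : ℚ) : ph n hn (ga n)⁻¹ y = y - 1 := by
  rw [map_inv, Equiv.Perm.inv_eq_iff_eq, ph_a]; ring
lemma ph_t' (y : ℚ) : ph n hn (gt n)⁻¹ y = (n : ℚ)⁻¹ * y := by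
  rw [map_inv, Equiv.Perm.inv_eq_iff_eq, ph_t]; field_simp

noncomputable def xx (hn : (n : ℚ) ≠ 0) (g : BS n) : ℚ := ph n hn g 0

lemma xxl_a (g : BS n) : xx hn (ga n * g) = xx hn g + 1 := by
  simp only [xx, map_mul, Equiv.Perm.mul_apply, ph_a]
lemma xxl_a' (g : BS n) : xx hn ((ga n)⁻¹ * g) = xx hn g - 1 := by
  simp only [xx, map_mul, Equiv.Perm.mul_apply, ph_a']
lemma xxl_t (g : BS n) : xx hn (gt n * g) = n * xx hn g := by
  simp only [xx, map_mul, Equiv.Perm.mul_apply, ph_t]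
lemma xxl_t' (g : BS n) : xx hn ((gt n)⁻¹ * g) = (n : ℚ)⁻¹ * xx hn g := by
  simp only [xx, map_mul, Equiv.Perm.mul_apply, ph_t']

lemma ph_eq (g : BS n) : ∀ y, ph n hn g y = (n : ℚ) ^ (ht n g) * y + xx hn g := by
  induction g using ind with
  | h1 => intro y; simp [xx, ht_one]
  | ha g ih =>
    intro y; rw [map_mul, Equiv.Perm.mul_apply, ph_a, ih, xxl_a, ht_mul, ht_a, zero_add]; ring
  | ha' g ih =>
    intro y
    rw [map_mul, Equiv.Perm.mul_apply, ph_a', ih, xxl_a', ht_mul, ht_inv, ht_a, neg_zero, zero_add]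
    ring
  | ht g ih =>
    intro y
    rw [map_mul, Equiv.Perm.mul_apply, ph_t, ih, xxl_t, ht_mul, ht_t, zpow_add₀ hn, zpow_one]; ring
  | ht' g ih =>
    intro y
    rw [map_mul, Equiv.Perm.mul_apply, ph_t', ih, xxl_t', ht_mul, ht_inv, ht_t, zpow_add₀ hn,
      zpow_neg_one]
    ring

lemma xx_mul (g k : BS n) : xx hn (g * k) = xx hn g + (n : ℚ) ^ (ht n g) * xx hn k := by
  conv_lhs => rw [xx, map_mul, Equiv.Perm.mul_apply, ph_eq]
  rw [← xx]; ring

lemma xx_one : xx hn (1 : BS n) = 0 := by simp [xx]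
lemma xx_a : xx hn (ga n) = 1 := by simp [xx, ph_a]
lemma xx_inv (g : BS n) : xx hn g = - (n : ℚ) ^ (ht n g) * xx hn g⁻¹ := by
  have := xx_mul (hn := hn) g g⁻¹
  rw [mul_inv_cancel, xx_one] at this
  linarith

lemma xx_den (g : BS n) : ∃ (c : ℕ) (k : ℤ), (n : ℚ) ^ c * xx hn g = k := by
  induction g using ind with
  | h1 => exact ⟨0, 0, by simp [xx_one]⟩
  | ha g ih =>
    obtain ⟨c, k, h⟩ := ih
    refine ⟨c, k + n ^ c, ?_⟩
    simp only [xx, map_mul, Equiv.Perm.mul_apply, ph_a] at h ⊢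
    push_cast; rw [← h]; ring
  | ha' g ih =>
    obtain ⟨c, k, h⟩ := ih
    refine ⟨c, k - n ^ c, ?_⟩
    simp only [xx, map_mul, Equiv.Perm.mul_apply, ph_a'] at h ⊢
    push_cast; rw [← h]; ring
  | ht g ih =>
    obtain ⟨c, k, h⟩ := ih
    refine ⟨c, n * k, ?_⟩
    simp only [xx, map_mul, Equiv.Perm.mul_apply, ph_t] at h ⊢
    push_cast; rw [← h]; ring
  | ht' g ih =>
    obtain ⟨c, k, h⟩ := ih
    refine ⟨c + 1, k, ?_⟩
    simp only [xx, map_mul, Equiv.Perm.mul_apply, ph_t'] at h ⊢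
    rw [← h]; field_simp; ring

/-! Cayley graph -/
section cay
variable {G : Type*} [Group G] {S : Set G}

lemma adj_iff (hs : ∀ s ∈ S, s⁻¹ ∈ S) (x y : G) :
    (cayleyGraph G S).Adj x y ↔ x ≠ y ∧ x⁻¹ * y ∈ S := by
  rw [cayleyGraph, SimpleGraph.fromRel_adj]
  have : y⁻¹ * x ∈ S → x⁻¹ * y ∈ S := fun h => by simpa using hs _ h
  tauto

def lmul (S : Set G) (g : G) : cayleyGraph G S →g cayleyGraph G S where
  toFun x := g * x
  map_rel' := by
    intro x y h
    rw [cayleyGraph, SimpleGraph.fromRel_adj] at *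
    simpa [mul_assoc] using h

lemma conn (hs : ∀ s ∈ S, s⁻¹ ∈ S) (hg : Subgroup.closure S = ⊤) :
    (cayleyGraph G S).Connected := by
  have key : ∀ g, (cayleyGraph G S).Reachable 1 g := by
    intro g
    have step : ∀ x s : G, s ∈ S → (cayleyGraph G S).Reachable x (x * s) := by
      intro x s h
      by_cases e : x = x * s
      · rw [← e]
      · exact SimpleGraph.Adj.reachable ((adj_iff hs _ _).2 ⟨e, by simpa using h⟩)
    have hg : g ∈ Subgroup.closure S := by rw [hg]; trivial
    induction hg using Subgroup.closure_induction_right with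
    | one => rfl
    | mul_right x hx y hy ih => exact ih.trans (step _ _ hy)
    | mul_inv_cancel x hx y hy ih => exact ih.trans (step _ _ (hs _ hy))
  have : Nonempty G := ⟨1⟩
  exact ⟨fun x y => (key x).symm.trans (key y)⟩

lemma dist_lmul (hc : (cayleyGraph G S).Connected) (g x y : G) :
    (cayleyGraph G S).dist (g * x) (g * y) ≤ (cayleyGraph G S).dist x y := by
  obtain ⟨w, hw⟩ := hc.exists_walk_length_eq_dist x y
  rw [← hw, ← SimpleGraph.Walk.length_map (lmul S g) w]
  exact SimpleGraph.dist_le _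

lemma dist_lmul' (hc : (cayleyGraph G S).Connected) (x y : G) :
    (cayleyGraph G S).dist x (x * y) ≤ (cayleyGraph G S).dist 1 y := by
  simpa using dist_lmul hc x 1 y

lemma len_mul (hc : (cayleyGraph G S).Connected) (x y : G) :
    (cayleyGraph G S).dist 1 (x * y) ≤ (cayleyGraph G S).dist 1 x + (cayleyGraph G S).dist 1 y :=
  hc.dist_triangle.trans (Nat.add_le_add_left (dist_lmul' hc x y) _)

lemma len_inv (hc : (cayleyGraph G S).Connected) (x : G) :
    (cayleyGraph G S).dist 1 x⁻¹ ≤ (cayleyGraph G S).dist 1 x := by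
  have := dist_lmul hc x⁻¹ x 1
  rw [SimpleGraph.dist_comm] at this
  simpa [SimpleGraph.dist_comm] using this

lemma len_pow (hc : (cayleyGraph G S).Connected) (x : G) (hx : (cayleyGraph G S).dist 1 x ≤ 1) (k : ℕ) :
    (cayleyGraph G S).dist 1 (x ^ k) ≤ k := by
  induction k with
  | zero => simp
  | succ k ih => rw [pow_succ]; have := len_mul hc (x ^ k) x; omega

lemma split {V : Type*} {Γ : SimpleGraph V} (hc : Γ.Connected) (x y : V) (a b : ℕ)
    (h : Γ.dist x y ≤ a + b) : ∃ z, Γ.dist x z ≤ a ∧ Γ.dist z y ≤ b := by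
  obtain ⟨w, hw⟩ := hc.exists_walk_length_eq_dist x y
  refine ⟨w.getVert a, ?_, ?_⟩
  · refine (SimpleGraph.dist_le (w.take a)).trans ?_
    simp
  · refine (SimpleGraph.dist_le (w.drop a)).trans ?_
    simp; omega

end cay

section bounds
variable {S : Set (BS n)}

lemma walk_bound (hs : ∀ s ∈ S, s⁻¹ ∈ S) (M : ℕ) (hM : 1 ≤ M) (h2 : 2 ≤ n) (σ : ℚ) (hσ : 0 ≤ σ)
    (hSM : ∀ s ∈ S, ht n s ≤ M) (hSσ : ∀ s ∈ S, |xx hn s| ≤ σ) (x y : BS n)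
    (w : (cayleyGraph (BS n) S).Walk x y) :
    |xx hn (x⁻¹ * y)| ≤ σ * (((n : ℚ) ^ M) ^ w.length - 1) := by
  have h2' : (2 : ℚ) ≤ n := by exact_mod_cast h2
  have hB : (2 : ℚ) ≤ (n : ℚ) ^ M := by
    calc (2 : ℚ) ≤ n := h2'
      _ = (n : ℚ) ^ 1 := by simp
      _ ≤ _ := pow_le_pow_right₀ (by linarith) hM
  induction w with
  | nil => simp [xx_one]
  | @cons x z y h p ih =>
    have hS := ((adj_iff hs _ _).1 h).2
    have e : x⁻¹ * y = (x⁻¹ * z) * (z⁻¹ * y) := by group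
    rw [e, xx_mul, SimpleGraph.Walk.length_cons, pow_succ]
    have h1 := hSσ _ hS
    have h3 : (n : ℚ) ^ (ht n (x⁻¹ * z)) ≤ (n : ℚ) ^ M := by
      rw [← zpow_natCast]
      exact zpow_le_zpow_right₀ (by linarith) (hSM _ hS)
    have h4 : 0 ≤ (n : ℚ) ^ (ht n (x⁻¹ * z)) := by positivity
    calc _ ≤ |xx hn (x⁻¹ * z)| + |(n : ℚ) ^ (ht n (x⁻¹ * z)) * xx hn (z⁻¹ * y)| := abs_add_le _ _
      _ = |xx hn (x⁻¹ * z)| + (n : ℚ) ^ (ht n (x⁻¹ * z)) * |xx hn (z⁻¹ * y)| := by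
        rw [abs_mul, abs_of_nonneg h4]
      _ ≤ σ + (n : ℚ) ^ M * (σ * (((n : ℚ) ^ M) ^ p.length - 1)) := by gcongr
      _ ≤ _ := by nlinarith

lemma walk_mod (hs : ∀ s ∈ S, s⁻¹ ∈ S) (c : ℕ)
    (hSc : ∀ s ∈ S, ∃ k : ℤ, (n : ℚ) ^ c * xx hn s = k) (x y : BS n)
    (w : (cayleyGraph (BS n) S).Walk x y) (hw : ∀ v ∈ w.support, (c : ℤ) + 1 ≤ ht n v) :
    ∃ k : ℤ, xx hn y - xx hn x = n * k := by
  induction w with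
  | nil => exact ⟨0, by simp⟩
  | @cons x z y h p ih =>
    obtain ⟨k, hk⟩ := ih (fun v hv => hw v (by simp [hv]))
    have hS := ((adj_iff hs _ _).1 h).2
    obtain ⟨j, hj⟩ := hSc _ hS
    obtain ⟨d, hd⟩ := Int.le.dest (hw x (by simp))
    refine ⟨k + n ^ d * j, ?_⟩
    have e : z = x * (x⁻¹ * z) := by group
    have e2 : xx hn z = xx hn x + (n : ℚ) ^ (ht n x) * xx hn (x⁻¹ * z) := by
      conv_lhs => rw [e, xx_mul]
    have e3 : (n : ℚ) ^ (ht n x) = n * n ^ d * n ^ c := by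
      rw [← hd, zpow_add₀ hn, zpow_add₀ hn, zpow_natCast, zpow_natCast]; simp; ring
    push_cast
    rw [← hj]
    rw [e3] at e2
    linear_combination hk + e2


lemma dist_bound (hs : ∀ s ∈ S, s⁻¹ ∈ S) (hc : (cayleyGraph (BS n) S).Connected)
    (M : ℕ) (hM : 1 ≤ M) (h2 : 2 ≤ n) (σ : ℚ) (hσ : 0 ≤ σ)
    (hSM : ∀ s ∈ S, ht n s ≤ M) (hSσ : ∀ s ∈ S, |xx hn s| ≤ σ) (x y : BS n) (l : ℕ)
    (hl : (cayleyGraph (BS n) S).dist x y ≤ l) :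
    |xx hn (x⁻¹ * y)| ≤ σ * ((n : ℚ) ^ M) ^ l := by
  obtain ⟨w, hw⟩ := hc.exists_walk_length_eq_dist x y
  refine (walk_bound hs M hM h2 σ hσ hSM hSσ x y w).trans ?_
  gcongr
  have h2' : (1 : ℚ) ≤ n := by exact_mod_cast (by omega : 1 ≤ n)
  have h3 : (1 : ℚ) ≤ (n : ℚ) ^ M := one_le_pow₀ h2'
  have : ((n : ℚ) ^ M) ^ w.length ≤ ((n : ℚ) ^ M) ^ l := pow_le_pow_right₀ h3 (by omega)
  linarith

lemma xx_diff (x y : BS n) : xx hn y = xx hn x + (n : ℚ) ^ (ht n x) * xx hn (x⁻¹ * y) := by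
  rw [← xx_mul]; congr 1; group

lemma core2 (hs : ∀ s ∈ S, s⁻¹ ∈ S) (hc : (cayleyGraph (BS n) S).Connected)
    (M : ℕ) (hM : 1 ≤ M) (h2 : 2 ≤ n) (σ : ℚ) (hσ : 0 ≤ σ)
    (hSM : ∀ s ∈ S, ht n s ≤ M) (hSσ : ∀ s ∈ S, |xx hn s| ≤ σ) (c : ℕ)
    (hSc : ∀ s ∈ S, ∃ k : ℤ, (n : ℚ) ^ c * xx hn s = k)
    (P Q : BS n) (w : (cayleyGraph (BS n) S).Walk P Q) (N' a b r : ℕ) (hw : w.length ≤ N')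
    (hv : ∀ v ∈ w.support, (cayleyGraph (BS n) S).dist 1 v ≤ a + b)
    (hPQ : xx hn Q - xx hn P = 1 ∨ xx hn Q - xx hn P = -1)
    (hP : ht n P = r * M) (X : ℚ) (hX : X ≤ xx hn P)
    (hnum : σ * ((n : ℚ) ^ M) ^ a + (n : ℚ) ^ c * (σ * ((n : ℚ) ^ M) ^ b) <
      X - ((n : ℚ) ^ M) ^ r * (σ * ((n : ℚ) ^ M) ^ N')) : False := by
  classical
  have h2' : (1 : ℚ) ≤ n := by exact_mod_cast (by omega : 1 ≤ n)
  by_cases hall : ∀ v ∈ w.support, (c : ℤ) + 1 ≤ ht n v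
  · obtain ⟨k, hk⟩ := walk_mod hs c hSc P Q w hall
    have hu : (n : ℤ) ∣ 1 := by
      rcases hPQ with h | h
      · exact ⟨k, by rw [h] at hk; exact_mod_cast hk⟩
      · refine ⟨-k, ?_⟩
        rw [h] at hk
        have : (-1 : ℤ) = n * k := by exact_mod_cast hk
        linarith
    have := Int.le_of_dvd one_pos hu
    omega
  · push Not at hall
    obtain ⟨v, hvs, hvh⟩ := hall
    have d1 : (cayleyGraph (BS n) S).dist P v ≤ N' :=
      (SimpleGraph.dist_le (w.takeUntil v hvs)).trans ((w.length_takeUntil_le_length hvs).trans hw)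
    have b1 := dist_bound (hn := hn) hs hc M hM h2 σ hσ hSM hSσ P v N' d1
    obtain ⟨z, hz1, hz2⟩ := split hc 1 v a b (hv v hvs)
    have b2 := dist_bound (hn := hn) hs hc M hM h2 σ hσ hSM hSσ 1 z a hz1
    rw [SimpleGraph.dist_comm] at hz2
    have b3 := dist_bound (hn := hn) hs hc M hM h2 σ hσ hSM hSσ v z b hz2
    rw [inv_one, one_mul] at b2
    have e1 := xx_diff (hn := hn) P v
    have e2 := xx_diff (hn := hn) v z
    have e3 : (n : ℚ) ^ (ht n P) = ((n : ℚ) ^ M) ^ r := by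
      rw [hP, ← pow_mul, mul_comm M r]; exact_mod_cast rfl
    rw [e3] at e1
    have e4 : (n : ℚ) ^ (ht n v) ≤ (n : ℚ) ^ c := by
      rw [← zpow_natCast]
      exact zpow_le_zpow_right₀ h2' (by omega)
    have p1 : -(((n : ℚ) ^ M) ^ r * (σ * ((n : ℚ) ^ M) ^ N')) ≤
        ((n : ℚ) ^ M) ^ r * xx hn (P⁻¹ * v) := by
      rw [← mul_neg]
      have := (abs_le.1 b1).1
      gcongr
    have p2 : -((n : ℚ) ^ c * (σ * ((n : ℚ) ^ M) ^ b)) ≤ (n : ℚ) ^ (ht n v) * xx hn (v⁻¹ * z) := by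
      have h0 : (0 : ℚ) ≤ (n : ℚ) ^ (ht n v) := by positivity
      have : |(n : ℚ) ^ (ht n v) * xx hn (v⁻¹ * z)| ≤ (n : ℚ) ^ c * (σ * ((n : ℚ) ^ M) ^ b) := by
        rw [abs_mul, abs_of_nonneg h0]
        gcongr
      exact (abs_le.1 this).1
    have p3 := (abs_le.1 b2).2
    linarith

end bounds

lemma core1 {V : Type*} {Γ : SimpleGraph V} (hc : Γ.Connected) (o : V) (k N A : ℕ)
    (h : ∀ (n : ℕ) (x y : V), Γ.dist o x = n → Γ.dist o y = n → Γ.dist x y ≤ k + A →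
      ∃ w : Γ.Walk x y, w.length ≤ N ∧ ∀ v ∈ w.support, Γ.dist o v ≤ n)
    (P Q : V) (h1 : Γ.dist o P ≤ Γ.dist o Q) (h2 : Γ.dist o Q ≤ Γ.dist o P + A)
    (h3 : Γ.dist P Q ≤ k) :
    ∃ w : Γ.Walk P Q, w.length ≤ N + A ∧ ∀ v ∈ w.support, Γ.dist o v ≤ Γ.dist o P + A := by
  classical
  obtain ⟨z, hz1, hz2⟩ := split hc o Q (Γ.dist o P) (Γ.dist o Q - Γ.dist o P) (by omega)
  have t1 : Γ.dist o Q ≤ Γ.dist o z + Γ.dist z Q := hc.dist_triangle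
  have t2 : Γ.dist P z ≤ Γ.dist P Q + Γ.dist Q z := hc.dist_triangle
  rw [SimpleGraph.dist_comm (u := Q)] at t2
  obtain ⟨w, hw1, hw2⟩ := h _ P z rfl (by omega) (by omega)
  obtain ⟨w', hw'⟩ := hc.exists_walk_length_eq_dist z Q
  refine ⟨w.append w', ?_, ?_⟩
  · rw [SimpleGraph.Walk.length_append]; omega
  · intro v hv
    rw [SimpleGraph.Walk.mem_support_append_iff] at hv
    rcases hv with hv | hv
    · have := hw2 v hv; omega
    · have t3 : Γ.dist o v ≤ Γ.dist o z + Γ.dist z v := hc.dist_triangle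
      have t4 : Γ.dist z v ≤ w'.length :=
        (SimpleGraph.dist_le (w'.takeUntil v hv)).trans (w'.length_takeUntil_le_length hv)
      omega

lemma exists_consts (S : Set (BS n)) (hS : S.Finite) : ∃ (c : ℕ) (σ : ℚ), 0 ≤ σ ∧
    (∀ s ∈ S, ∃ k : ℤ, (n : ℚ) ^ c * xx hn s = k) ∧ ∀ s ∈ S, |xx hn s| ≤ σ := by
  choose f g hfg using xx_den (n := n) (hn := hn)
  obtain ⟨c, hc⟩ := (hS.image f).bddAbove
  obtain ⟨σ, hσ⟩ := (hS.image (fun s => |xx hn s|)).bddAbove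
  refine ⟨c, max σ 0, le_max_right _ _, ?_, ?_⟩
  · intro s hs
    obtain ⟨d, hd⟩ := Nat.exists_eq_add_of_le (hc ⟨s, hs, rfl⟩)
    refine ⟨n ^ d * g s, ?_⟩
    push_cast
    rw [← hfg, hd, pow_add]; ring
  · intro s hs
    exact (hσ ⟨s, hs, rfl⟩).trans (le_max_left _ _)

lemma exists_top (S : Set (BS n)) (hS : S.Finite) (hsym : ∀ s ∈ S, s⁻¹ ∈ S)
    (hg : Subgroup.closure S = ⊤) :
    ∃ (M : ℕ) (u : BS n), 1 ≤ M ∧ u ∈ S ∧ ht n u = M ∧ ∀ s ∈ S, ht n s ≤ M := by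
  have key : ∃ s ∈ S, ht n s ≠ 0 := by
    by_contra! hcon
    have : Subgroup.closure S ≤ (hh n).ker := by
      rw [Subgroup.closure_le]
      intro s hs
      have := hcon s hs
      simpa [ht, MonoidHom.mem_ker] using this
    rw [hg] at this
    have h1 : gt n ∈ (hh n).ker := this trivial
    have h2 := ht_t n
    rw [MonoidHom.mem_ker] at h1
    simp [ht, h1] at h2
  obtain ⟨s, hs, hs0⟩ := key
  obtain ⟨u, hu, hmax⟩ := Set.exists_max_image S (ht n) hS ⟨s, hs⟩
  have h1 := hmax s hs
  have h2 := hmax _ (hsym s hs)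
  rw [ht_inv] at h2
  refine ⟨(ht n u).toNat, u, by omega, hu, by omega, fun s hs => ?_⟩
  have := hmax s hs
  omega

lemma xx_conj (g : BS n) : xx hn (g * ga n * g⁻¹) = (n : ℚ) ^ (ht n g) := by
  rw [xx_mul, xx_mul, xx_a, ht_mul, ht_a, add_zero]
  have := xx_inv (hn := hn) g
  linarith

theorem main (hn : (n : ℚ) ≠ 0) (h2 : 2 ≤ n)
    (S : Set (BS n)) (hS_fin : S.Finite) (hs : ∀ s ∈ S, s⁻¹ ∈ S)
    (hS_one : (1 : BS n) ∉ S) (hS_gen : Subgroup.closure S = ⊤) :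
    ∃ k : ℕ, ¬ KAlmostConvex (cayleyGraph (BS n) S) 1 k := by
  have hc := conn hs hS_gen
  obtain ⟨c, σ, hσ, hSc, hSσ⟩ := exists_consts (hn := hn) S hS_fin
  obtain ⟨M, u, hM, hu, huM, hSM⟩ := exists_top S hS_fin hs hS_gen
  have hu1 : (cayleyGraph (BS n) S).dist 1 u ≤ 1 := by
    have : (cayleyGraph (BS n) S).Adj 1 u :=
      (adj_iff hs _ _).2 ⟨fun h => hS_one (h ▸ hu), by simpa using hu⟩
    exact (SimpleGraph.dist_eq_one_iff_adj.2 this).le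
  have h2' : (2 : ℚ) ≤ n := by exact_mod_cast h2
  have hB : (2 : ℚ) ≤ (n : ℚ) ^ M := by
    calc (2 : ℚ) ≤ n := h2'
      _ = (n : ℚ) ^ 1 := by simp
      _ ≤ _ := pow_le_pow_right₀ (by linarith) hM
  have hnB : (n : ℚ) ≤ (n : ℚ) ^ M := by
    calc (n : ℚ) = (n : ℚ) ^ 1 := by simp
      _ ≤ _ := pow_le_pow_right₀ (by linarith) hM
  have hBpow : ∀ k : ℕ, (k : ℚ) ≤ ((n : ℚ) ^ M) ^ k := by
    intro k
    calc (k : ℚ) ≤ ((2 ^ k : ℕ) : ℚ) := by exact_mod_cast Nat.lt_two_pow_self.le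
      _ = 2 ^ k := by push_cast; rfl
      _ ≤ _ := by gcongr
  have hpw : ∀ k : ℕ, (n : ℚ) ^ (ht n (u ^ k)) = ((n : ℚ) ^ M) ^ k := by
    intro k
    rw [ht_pow, huM, ← pow_mul, mul_comm M k]; exact_mod_cast rfl
  set B : ℚ := (n : ℚ) ^ M with hBdef
  set A := (cayleyGraph (BS n) S).dist 1 (ga n) with hA
  obtain ⟨c0, hc0⟩ := exists_nat_gt (8 * σ)
  have hc0' : 8 * σ ≤ B ^ c0 := hc0.le.trans (hBpow c0)
  set r := 3 * A + 2 * c0 + c with hr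
  set k0 := (cayleyGraph (BS n) S).dist 1 ((u ^ r)⁻¹ * ga n * u ^ r) with hk0
  refine ⟨k0 + A, ?_⟩
  rintro ⟨N, hN⟩
  obtain ⟨p0, hp0⟩ := exists_nat_gt (4 * (σ * B ^ r + B ^ r * (σ * B ^ (N + A))))
  obtain ⟨p, hpp, hpr⟩ : ∃ p, p0 ≤ p ∧ r ≤ p := ⟨max p0 r, le_max_left _ _, le_max_right _ _⟩
  set q := c0 + c + p with hq
  obtain ⟨d, hd⟩ := Nat.exists_eq_add_of_le (show r ≤ q by omega)
  set C := u ^ q * ga n * (u ^ q)⁻¹ with hC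
  set P := C * u ^ r with hP
  set Q := ga n * P with hQ
  have hP' : P = u ^ q * ga n * (u ^ d)⁻¹ := by
    rw [hP, hC, hd, pow_add, ((Commute.refl u).pow_pow r d).eq]; group
  have lP : (cayleyGraph (BS n) S).dist 1 P ≤ q + A + d := by
    rw [hP']
    have e1 := len_mul hc (u ^ q * ga n) (u ^ d)⁻¹
    have e2 := len_mul hc (u ^ q) (ga n)
    have e3 := len_inv hc (u ^ d)
    have e4 := len_pow hc u hu1 d
    have e5 := len_pow hc u hu1 q
    omega
  have lQ : (cayleyGraph (BS n) S).dist 1 Q ≤ (cayleyGraph (BS n) S).dist 1 P + A := by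
    have := len_mul hc (ga n) P
    rw [← hQ] at this
    omega
  have lP2 : (cayleyGraph (BS n) S).dist 1 P ≤ (cayleyGraph (BS n) S).dist 1 Q + A := by
    have e1 := len_mul hc (ga n)⁻¹ Q
    have e2 := len_inv hc (ga n)
    rw [hQ, inv_mul_cancel_left, ← hQ] at e1
    omega
  have hQ2 : Q = P * ((u ^ r)⁻¹ * ga n * u ^ r) := by
    have := (comm n (u ^ q)).eq
    rw [← hC] at this
    rw [hQ, hP, ← mul_assoc, this]; group
  have dPQ : (cayleyGraph (BS n) S).dist P Q ≤ k0 := by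
    rw [hQ2]; exact dist_lmul' hc _ _
  have xQ : xx hn Q = xx hn P + 1 := xxl_a P
  have xP : B ^ q - σ * B ^ r ≤ xx hn P := by
    have e1 : xx hn P = B ^ q + xx hn (u ^ r) := by
      rw [hP, xx_mul, hC, xx_conj, hpw, ht_mul, ht_mul, ht_inv, ht_a]
      simp
    have e2 := dist_bound (hn := hn) hs hc M hM h2 σ hσ hSM hSσ 1 (u ^ r) r (len_pow hc u hu1 r)
    rw [inv_one, one_mul] at e2
    have := (abs_le.1 e2).1
    linarith
  have hP3 : ht n P = r * M := by
    rw [hP, hC, ht_mul, ht_mul, ht_mul, ht_inv, ht_a, ht_pow, ht_pow, huM]; ring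
  have hQ3 : ht n Q = r * M := by rw [hQ, ht_mul, ht_a, hP3, zero_add]
  have hnum : σ * B ^ (c + p) + (n : ℚ) ^ c * (σ * B ^ p) <
      (B ^ q - σ * B ^ r) - B ^ r * (σ * B ^ (N + A)) := by
    have f1 : (n : ℚ) ^ c * (σ * B ^ p) ≤ σ * B ^ (c + p) := by
      calc (n : ℚ) ^ c * (σ * B ^ p) ≤ B ^ c * (σ * B ^ p) := by gcongr
        _ = _ := by rw [pow_add]; ring
    have f2 : 8 * (σ * B ^ (c + p)) ≤ B ^ q := by
      calc 8 * (σ * B ^ (c + p)) = (8 * σ) * B ^ (c + p) := by ring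
        _ ≤ B ^ c0 * B ^ (c + p) := by gcongr
        _ = _ := by rw [← pow_add]; congr 1; omega
    have f3 : (p0 : ℚ) ≤ B ^ q := by
      refine le_trans ?_ (hBpow q)
      exact_mod_cast (by omega : p0 ≤ q)
    have f4 : 0 < B ^ q := by positivity
    linarith
  rcases le_total ((cayleyGraph (BS n) S).dist 1 P) ((cayleyGraph (BS n) S).dist 1 Q) with hle | hle
  · obtain ⟨w, hw1, hw2⟩ := core1 hc 1 k0 N A hN P Q hle lQ dPQ
    refine core2 (hn := hn) hs hc M hM h2 σ hσ hSM hSσ c hSc P Q w (N + A) (c + p) p r hw1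
      (fun v hv => ?_) (Or.inl (by rw [xQ]; ring)) hP3 _ xP hnum
    have := hw2 v hv
    omega
  · rw [SimpleGraph.dist_comm] at dPQ
    obtain ⟨w, hw1, hw2⟩ := core1 hc 1 k0 N A hN Q P hle lP2 dPQ
    refine core2 (hn := hn) hs hc M hM h2 σ hσ hSM hSσ c hSc Q P w (N + A) (c + p) p r hw1
      (fun v hv => ?_) (Or.inr (by rw [xQ]; ring)) hQ3 _ (by rw [xQ]; linarith) hnum
    have := hw2 v hv
    omega

end BSProof

/-- For `n ≥ 2`, the solvable Baumslag–Solitar group `BS(1,n)` is not almost convex: for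
every finite symmetric generating set `S` there is a `k` such that the Cayley graph is not
`k`-almost convex. -/
theorem bs_not_almostConvex (n : ℕ) (hn : 2 ≤ n)
    (S : Set (BS n)) (hS_fin : S.Finite) (hS_symm : ∀ s ∈ S, s⁻¹ ∈ S)
    (hS_one : (1 : BS n) ∉ S) (hS_gen : Subgroup.closure S = ⊤) :
    ∃ k : ℕ, ¬ KAlmostConvex (cayleyGraph (BS n) S) 1 k := by
  exact BSProof.main (by positivity) hn S hS_fin hS_symm hS_one hS_gen
end

section
/- Let G be a group with a finite symmetric generating set S that admits a Lipschitz combing with respect to the word metric of S. Then G is finitely presented: there is a finite set X and a surjective group homomorphism from the free group on X onto G whose kernel is the normal closure of a finite subset. -/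
open scoped Pointwise in
lemma combing_walk_mem {G : Type} [Group G] (S : Set G) (hS_symm : ∀ s ∈ S, s⁻¹ ∈ S)
    {x y : G} (p : (cayleyGraph G S).Walk x y) : x⁻¹ * y ∈ (insert 1 S : Set G) ^ p.length := by
  induction p with
  | nil => simp
  | @cons u v w h p ih =>
    rw [SimpleGraph.Walk.length_cons, pow_succ']
    have hu : u⁻¹ * v ∈ insert 1 S := by
      rcases (SimpleGraph.fromRel_adj _ _ _).1 h with ⟨_, h | h⟩
      · exact Or.inr h
      · right
        simpa using hS_symm _ h
    have := Set.mul_mem_mul hu ih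
    simpa [mul_assoc] using this

lemma combing_reach {G : Type} [Group G] (S : Set G) (hS_gen : Subgroup.closure S = ⊤)
    (x y : G) : (cayleyGraph G S).Reachable x y := by
  have key : ∀ z : G, ∀ g : G, (cayleyGraph G S).Reachable g (g * z) := by
    intro z
    have hz : z ∈ Subgroup.closure S := by rw [hS_gen]; trivial
    induction hz using Subgroup.closure_induction with
    | mem a ha =>
      intro g
      by_cases h : g = g * a
      · rw [← h]
      · exact SimpleGraph.Adj.reachable
          ((SimpleGraph.fromRel_adj _ _ _).2 ⟨h, Or.inl (by simpa using ha)⟩)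
    | one => intro g; simp
    | mul a b _ _ iha ihb =>
      intro g
      rw [← mul_assoc]
      exact (iha g).trans (ihb _)
    | inv a _ iha =>
      intro g
      have := iha (g * a⁻¹)
      rw [inv_mul_cancel_right] at this
      exact this.symm
  simpa using key (x⁻¹ * y) x

open scoped Pointwise in
lemma combing_dist_mem {G : Type} [Group G] (S : Set G) (hS_symm : ∀ s ∈ S, s⁻¹ ∈ S)
    (hS_gen : Subgroup.closure S = ⊤) {x y : G} {n : ℕ}
    (h : (cayleyGraph G S).dist x y ≤ n) : x⁻¹ * y ∈ (insert 1 S : Set G) ^ n := by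
  obtain ⟨p, hp⟩ := (combing_reach S hS_gen x y).exists_walk_length_eq_dist
  have := combing_walk_mem S hS_symm p
  rw [hp] at this
  exact Set.pow_subset_pow_right (Set.mem_insert _ _) h this

lemma combing_dist_le {G : Type} [Group G] (S : Set G) {b : G} (hb : b ∈ insert 1 S) (g : G) :
    (cayleyGraph G S).dist g (g * b) ≤ 1 := by
  by_cases h : g = g * b
  · rw [← h]; simp
  · have hb' : b ∈ S := by
      rcases hb with rfl | hb
      · simp at h
      · exact hb
    have : (cayleyGraph G S).Adj g (g * b) :=
      (SimpleGraph.fromRel_adj _ _ _).2 ⟨h, Or.inl (by simpa using hb')⟩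
    exact (SimpleGraph.dist_eq_one_iff_adj.2 this).le

/-- lift of a path in `G` to a group `Q` along `e`. -/
def combingLift {G Q : Type} [Group G] [Group Q] (e : G → Q) (p : ℕ → G) : ℕ → Q
  | 0 => 1
  | t + 1 => combingLift e p t * e ((p t)⁻¹ * p (t + 1))

open scoped Pointwise in
lemma combing_section {G Q : Type} [Group G] [Group Q] (T : Set G) (h1 : (1 : G) ∈ T)
    (C : ℕ) (e : G → Q)
    (he : ∀ a b, a ∈ T ^ (C + 1) → b ∈ T ^ (C + 1) → a * b ∈ T ^ (C + 1) → e a * e b = e (a * b))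
    (s : G → ℕ → G)
    (hs_start : ∀ g, s g 0 = 1)
    (hs_step : ∀ g t, (s g t)⁻¹ * s g (t + 1) ∈ T)
    (hs_end : ∀ g, ∃ N, ∀ t ≥ N, s g t = g)
    (hs_lip : ∀ g, ∀ b ∈ T, ∀ t, (s g t)⁻¹ * s (g * b) t ∈ T ^ C) :
    ∃ τ : G → Q, ∀ g, ∀ b ∈ T ^ (C + 1), τ (g * b) = τ g * e b := by
  have hTB : T ⊆ T ^ (C + 1) := by
    conv_lhs => rw [← pow_one T]
    exact Set.pow_subset_pow_right h1 (by omega)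
  have hCB : T ^ C ⊆ T ^ (C + 1) := Set.pow_subset_pow_right h1 (by omega)
  have e1 : e 1 = 1 := by
    have := he 1 1 (hTB h1) (hTB h1) (by simpa using hTB h1)
    simpa using this
  have hsq : ∀ g, ∀ b ∈ T, ∀ t, combingLift e (s (g * b)) t
      = combingLift e (s g) t * e ((s g t)⁻¹ * s (g * b) t) := by
    intro g b hb t
    induction t with
    | zero => simp [combingLift, hs_start, e1]
    | succ t ih =>
      have m1 := hs_lip g b hb t
      have m2 := hs_step (g * b) t
      have m3 := hs_step g t
      have m4 := hs_lip g b hb (t + 1)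
      have m5 : (s g t)⁻¹ * s (g * b) (t + 1) ∈ T ^ (C + 1) := by
        have := Set.mul_mem_mul m1 m2
        rw [← pow_succ] at this
        simpa [mul_assoc] using this
      have r1 := he _ _ (hCB m1) (hTB m2) (by simpa [mul_assoc] using m5)
      have r2 := he _ _ (hTB m3) (hCB m4) (by simpa [mul_assoc] using m5)
      rw [combingLift, combingLift, ih, mul_assoc, mul_assoc, r1, r2]
      simp [mul_assoc]
  choose N hN using hs_end
  have hconst : ∀ g, ∀ k, combingLift e (s g) (N g + k) = combingLift e (s g) (N g) := by
    intro g k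
    induction k with
    | zero => rfl
    | succ k ih =>
      rw [← add_assoc, combingLift, hN g (N g + k) (by omega), hN g (N g + k + 1) (by omega), ih]
      simp [e1]
  have hconst' : ∀ g, ∀ t ≥ N g, combingLift e (s g) t = combingLift e (s g) (N g) := by
    intro g t ht
    obtain ⟨k, rfl⟩ := Nat.exists_eq_add_of_le ht
    exact hconst g k
  refine ⟨fun g => combingLift e (s g) (N g), ?_⟩
  have base : ∀ g, ∀ b ∈ T, combingLift e (s (g * b)) (N (g * b))
      = combingLift e (s g) (N g) * e b := by
    intro g b hb
    have := hsq g b hb (max (N g) (N (g * b)))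
    rw [hconst' g _ (le_max_left _ _), hconst' (g * b) _ (le_max_right _ _),
      hN g _ (le_max_left _ _), hN (g * b) _ (le_max_right _ _)] at this
    simpa using this
  have key : ∀ n, n ≤ C + 1 → ∀ g, ∀ b ∈ T ^ n, combingLift e (s (g * b)) (N (g * b))
      = combingLift e (s g) (N g) * e b := by
    intro n
    induction n with
    | zero =>
      intro _ g b hb
      have : b = 1 := by simpa using hb
      subst this
      simp [e1]
    | succ n ih =>
      intro hn g b hb
      have hb' := hb
      rw [pow_succ] at hb
      obtain ⟨a, ha, c, hc, rfl⟩ := Set.mem_mul.1 hb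
      rw [← mul_assoc, base _ c hc, ih (by omega) g a ha, mul_assoc,
        he a c (Set.pow_subset_pow_right h1 (by omega) ha) (hTB hc)
          (Set.pow_subset_pow_right h1 hn hb')]
  exact fun g b hb => key (C + 1) le_rfl g b hb

/-- A group admitting a Lipschitz combing (with respect to the word metric of a finite
symmetric generating set) is finitely presented. Here a combing assigns to each `g ∈ G`
a discrete path `s g : ℕ → G` from `1` to `g` moving by at most one step at a time, and
it is Lipschitz if `d(s g t, s h t) ≤ C₁ · d(g,h) + C₂` for all `g, h, t`. -/
theorem lipschitz_combing_finitelyPresented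
    (G : Type) [Group G] (S : Set G)
    (hS_fin : S.Finite) (hS_symm : ∀ s ∈ S, s⁻¹ ∈ S) (hS_one : (1 : G) ∉ S)
    (hS_gen : Subgroup.closure S = ⊤)
    (s : G → ℕ → G)
    (hs_start : ∀ g, s g 0 = 1)
    (hs_step : ∀ g t, (cayleyGraph G S).dist (s g t) (s g (t + 1)) ≤ 1)
    (hs_end : ∀ g, ∃ T, ∀ t ≥ T, s g t = g)
    (C₁ C₂ : ℕ)
    (hs_lip : ∀ g h t, (cayleyGraph G S).dist (s g t) (s h t) ≤
      C₁ * (cayleyGraph G S).dist g h + C₂) :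
    IsFinitelyPresented G := by
  classical
  let _ : Monoid (Set G) := Set.monoid
  set T : Set G := insert 1 S with hT
  have h1 : (1 : G) ∈ T := Set.mem_insert _ _
  obtain ⟨B, hBdef⟩ : ∃ B : Set G, B = T ^ (C₁ + C₂ + 1) := ⟨_, rfl⟩
  have hBfin : B.Finite := by
    rw [hBdef]
    have hfin : ∀ n : ℕ, (T ^ n).Finite := by
      intro n
      induction n with
      | zero => rw [pow_zero]; exact Set.finite_singleton 1
      | succ n ih => rw [pow_succ]; exact ih.mul (hS_fin.insert 1)
    exact hfin _
  have hTB : T ⊆ B := by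
    rw [hBdef]
    conv_lhs => rw [← pow_one T]
    exact Set.pow_subset_pow_right h1 (by omega)
  have : Finite B := hBfin
  let φ : FreeGroup B →* G := FreeGroup.lift (fun b : B => (b : G))
  let R : Set (FreeGroup B) := Set.range (fun p : {p : B × B // (p.1 : G) * p.2 ∈ B} =>
    FreeGroup.of p.1.1 * FreeGroup.of p.1.2 * (FreeGroup.of (⟨_, p.2⟩ : B))⁻¹)
  refine ⟨B, this, φ, ?_, R, Set.finite_range _, ?_⟩
  · rw [← MonoidHom.range_eq_top, eq_top_iff, ← hS_gen, Subgroup.closure_le]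
    intro a ha
    exact ⟨FreeGroup.of ⟨a, hTB (Or.inr ha)⟩, by simp [φ]⟩
  · apply le_antisymm
    · let q := QuotientGroup.mk' (Subgroup.normalClosure R)
      let e : G → FreeGroup B ⧸ Subgroup.normalClosure R :=
        fun g => if h : g ∈ B then q (FreeGroup.of ⟨g, h⟩) else 1
      have eB : ∀ b : B, e b = q (FreeGroup.of b) := fun b => by simp [e]
      have he : ∀ a b, a ∈ B → b ∈ B → a * b ∈ B → e a * e b = e (a * b) := by
        intro a b ha hb hab
        rw [eB ⟨a, ha⟩, eB ⟨b, hb⟩, eB ⟨_, hab⟩, ← map_mul, ← mul_inv_eq_one, ← map_inv, ← map_mul]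
        refine (QuotientGroup.eq_one_iff _).2 (Subgroup.subset_normalClosure ?_)
        exact ⟨⟨(⟨a, ha⟩, ⟨b, hb⟩), hab⟩, rfl⟩
      obtain ⟨τ, hτ⟩ := combing_section T h1 (C₁ + C₂) e (by rw [← hBdef]; exact he) s hs_start
        (fun g t => by
          have := combing_dist_mem S hS_symm hS_gen (hs_step g t)
          rwa [pow_one] at this)
        hs_end
        (fun g b hb t => by
          apply combing_dist_mem S hS_symm hS_gen
          refine (hs_lip g (g * b) t).trans ?_
          have := Nat.mul_le_mul_left C₁ (combing_dist_le S hb g)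
          omega)
      rw [← hBdef] at hτ
      have key : ∀ w : FreeGroup B, ∀ g, τ (g * φ w) = τ g * q w := by
        intro w
        induction w using FreeGroup.induction_on with
        | C1 => intro g; simp
        | of b =>
          intro g
          rw [← eB b, ← hτ g b b.2]
          simp [φ]
        | inv_of b ih =>
          intro g
          have := ih (g * φ (FreeGroup.of b)⁻¹)
          rw [map_inv, inv_mul_cancel_right] at this
          rw [map_inv, map_inv, this, mul_inv_cancel_right]
        | mul x y ihx ihy =>
          intro g
          rw [map_mul, map_mul, ← mul_assoc, ihy, ihx, mul_assoc]
      intro w hw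
      have h := key w 1
      rw [MonoidHom.mem_ker.1 hw] at h
      have h2 : q w = 1 := by simpa using h
      exact (QuotientGroup.eq_one_iff _).1 h2
    · apply Subgroup.normalClosure_le_normal
      rintro _ ⟨p, rfl⟩
      simp [φ, MonoidHom.mem_ker]
end
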